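/- Let A be a linear relation in a complex vector space H. Then for every λ ∈ ℂ one has R_c(A) = R_c(A − λ). -/

import Mathlib

/-!
Since `(A - λ) - (-λ) = A`, only the inclusion `R_c(A) ⊆ R_c(A - λ)` is needed. A chain
`0 → x₁ → ⋯ → xₘ` in `A` gives `xᵢ → xᵢ₊₁ - λ xᵢ` in `A - λ`, so inductively
`R_∞(A) ⊆ R_∞(A - λ)`.

The inclusion `R_c(A) ⊆ R_0(A - λ)` is `mem_root_of_chain`. A point of `R_c(A)` lies on a chain
`0 = u₀ → u₁ → ⋯` in `A` that is eventually zero. Let `φ : ℂ[X] → H` be the linear map with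
`φ (X ^ i) = uᵢ`; then `(φ p, φ ((X - λ) p)) ∈ A - λ` for every `p`. As `φ 1 = 0`, the subspace
`S = {p | φ p ∈ R_0(A - λ)}` contains the constants, and hence is closed under division by
`X - λ` with the remainder discarded. This division lowers the degree by one and preserves
monicity, and `S` contains `X ^ j` for all large `j`, so `S` contains a monic polynomial of every
degree, that is, `S = ℂ[X]`.
-/

open Submodule Set

variable {H : Type*} [AddCommGroup H] [Module ℂ H]

/-- A linear relation in `H`: a linear subspace of the product `H × H`. -/
abbrev LinRel (H : Type*) [AddCommGroup H] [Module ℂ H] : Type _ := Submodule ℂ (H × H)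

namespace LinRel

/-- The relation `A - λ = {(x, y - λ x) : (x,y) ∈ A}`. -/
def shift (A : LinRel H) (lam : ℂ) : LinRel H :=
  A.map ((LinearMap.fst ℂ H H).prod (LinearMap.snd ℂ H H - lam • LinearMap.fst ℂ H H))

/-- The relation `λ A = {(x, λ y) : (x,y) ∈ A}`. -/
def smulRel (lam : ℂ) (A : LinRel H) : LinRel H :=
  A.map ((LinearMap.fst ℂ H H).prod (lam • LinearMap.snd ℂ H H))

/-- The inverse relation `A⁻¹ = {(y,x) : (x,y) ∈ A}`. -/
def inv (A : LinRel H) : LinRel H :=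
  A.map ((LinearMap.snd ℂ H H).prod (LinearMap.fst ℂ H H))

/-- The product (composition) `A B = {(x,y) : ∃ z, (x,z) ∈ B ∧ (z,y) ∈ A}`. -/
def comp (A B : LinRel H) : LinRel H where
  carrier := {p | ∃ z, (p.1, z) ∈ B ∧ (z, p.2) ∈ A}
  zero_mem' := ⟨0, B.zero_mem, A.zero_mem⟩
  add_mem' := by
    rintro p q ⟨z1, h1, h2⟩ ⟨z2, h3, h4⟩
    exact ⟨z1 + z2, B.add_mem h1 h3, A.add_mem h2 h4⟩
  smul_mem' := by
    rintro c p ⟨z, h1, h2⟩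
    exact ⟨c • z, B.smul_mem c h1, A.smul_mem c h2⟩

/-- The identity relation `I = {(x,x) : x ∈ H}`. -/
def idRel : LinRel H := LinearMap.graph (LinearMap.id : H →ₗ[ℂ] H)

/-- Powers: `A⁰ = I` and `Aᵏ = A · Aᵏ⁻¹`. -/
def pow (A : LinRel H) : ℕ → LinRel H
  | 0 => idRel
  | (k+1) => comp A (pow A k)

/-- The kernel `ker A = {x : (x,0) ∈ A}`. -/
def ker (A : LinRel H) : Submodule ℂ H := A.comap (LinearMap.inl ℂ H H)

/-- The multivalued part `mul A = {y : (0,y) ∈ A}`. -/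
def mul (A : LinRel H) : Submodule ℂ H := A.comap (LinearMap.inr ℂ H H)

lemma mem_ker {A : LinRel H} {x : H} : x ∈ ker A ↔ (x, (0:H)) ∈ A := by
  simp [ker, Submodule.mem_comap]

lemma mem_mul {A : LinRel H} {y : H} : y ∈ mul A ↔ ((0:H), y) ∈ A := by
  simp [mul, Submodule.mem_comap]

lemma ker_pow_le_succ (A : LinRel H) (i : ℕ) : ker (pow A i) ≤ ker (pow A (i+1)) := by
  intro x hx
  rw [mem_ker] at hx ⊢
  exact ⟨0, hx, A.zero_mem⟩

lemma ker_pow_mono (A : LinRel H) : Monotone fun i => ker (pow A i) :=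
  monotone_nat_of_le_succ (ker_pow_le_succ A)

lemma mul_pow_le_succ (A : LinRel H) : ∀ i, mul (pow A i) ≤ mul (pow A (i+1)) := by
  intro i
  induction i with
  | zero =>
    intro y hy
    rw [mem_mul] at hy ⊢
    have : y = 0 := by simpa [pow, idRel, LinearMap.mem_graph_iff] using hy
    subst this
    exact Submodule.zero_mem _
  | succ i ih =>
    intro y hy
    rw [mem_mul] at hy ⊢
    obtain ⟨w, hw, hwy⟩ := hy
    exact ⟨w, mem_mul.mp (ih (mem_mul.mpr hw)), hwy⟩

lemma mul_pow_mono (A : LinRel H) : Monotone fun i => mul (pow A i) :=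
  monotone_nat_of_le_succ (mul_pow_le_succ A)

/-- The root space `R_λ(A) = ⋃_{i ≥ 1} ker (A - λ)ⁱ`. -/
def rootSpace (A : LinRel H) (lam : ℂ) : Submodule ℂ H where
  carrier := ⋃ i : ℕ, (ker (pow (shift A lam) (i+1)) : Set H)
  zero_mem' := Set.mem_iUnion.2 ⟨0, Submodule.zero_mem _⟩
  add_mem' := by
    intro a b ha hb
    obtain ⟨i, hi⟩ := Set.mem_iUnion.1 ha
    obtain ⟨j, hj⟩ := Set.mem_iUnion.1 hb
    exact Set.mem_iUnion.2 ⟨max i j, Submodule.add_mem _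
      (ker_pow_mono _ (by omega : i + 1 ≤ max i j + 1) hi)
      (ker_pow_mono _ (by omega : j + 1 ≤ max i j + 1) hj)⟩
  smul_mem' := by
    intro c a ha
    obtain ⟨i, hi⟩ := Set.mem_iUnion.1 ha
    exact Set.mem_iUnion.2 ⟨i, Submodule.smul_mem _ c hi⟩

/-- The root space at infinity `R_∞(A) = ⋃_{i ≥ 1} mul Aⁱ`. -/
def rootInf (A : LinRel H) : Submodule ℂ H where
  carrier := ⋃ i : ℕ, (mul (pow A (i+1)) : Set H)
  zero_mem' := Set.mem_iUnion.2 ⟨0, Submodule.zero_mem _⟩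
  add_mem' := by
    intro a b ha hb
    obtain ⟨i, hi⟩ := Set.mem_iUnion.1 ha
    obtain ⟨j, hj⟩ := Set.mem_iUnion.1 hb
    exact Set.mem_iUnion.2 ⟨max i j, Submodule.add_mem _
      (mul_pow_mono _ (by omega : i + 1 ≤ max i j + 1) hi)
      (mul_pow_mono _ (by omega : j + 1 ≤ max i j + 1) hj)⟩
  smul_mem' := by
    intro c a ha
    obtain ⟨i, hi⟩ := Set.mem_iUnion.1 ha
    exact Set.mem_iUnion.2 ⟨i, Submodule.smul_mem _ c hi⟩

/-- The singular chain space `R_c(A) = R_0(A) ∩ R_∞(A)`. -/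
def singChain (A : LinRel H) : Submodule ℂ H := rootSpace A 0 ⊓ rootInf A

/-- The root space at a point of `ℂ ∪ {∞}` (modelled as `Option ℂ`, with `none = ∞`). -/
def rootSpaceE (A : LinRel H) : Option ℂ → Submodule ℂ H
  | none => rootInf A
  | some lam => rootSpace A lam

/-- `λ ∈ ℂ ∪ {∞}` is an eigenvalue of `A`. -/
def isEigenvalue (A : LinRel H) : Option ℂ → Prop
  | none => mul A ≠ ⊥
  | some lam => ker (shift A lam) ≠ ⊥

end LinRel

namespace LinRel

open Polynomial

lemma mem_shift {A : LinRel H} {lam : ℂ} {x y : H} :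
    (x, y) ∈ shift A lam ↔ (x, y + lam • x) ∈ A := by
  constructor
  · rintro ⟨⟨a, b⟩, h, he⟩
    obtain ⟨rfl, rfl⟩ := Prod.mk.inj he
    simpa using h
  · intro h
    exact ⟨_, h, by simp⟩

lemma shift_zero (A : LinRel H) : shift A 0 = A := by
  ext ⟨x, y⟩
  simp [mem_shift]

lemma shift_shift_neg (A : LinRel H) (lam : ℂ) : shift (shift A lam) (-lam) = A := by
  ext ⟨x, y⟩
  simp [mem_shift]

lemma mem_rootInf {A : LinRel H} {x : H} :
    x ∈ rootInf A ↔ ∃ i : ℕ, ((0 : H), x) ∈ pow A (i + 1) := by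
  change x ∈ (⋃ i : ℕ, (mul (pow A (i+1)) : Set H)) ↔ _
  simp [mem_mul]

lemma mem_rootSpace_zero {A : LinRel H} {x : H} :
    x ∈ rootSpace A 0 ↔ ∃ i : ℕ, (x, (0 : H)) ∈ pow A (i + 1) := by
  change x ∈ (⋃ i : ℕ, (ker (pow (shift A 0) (i+1)) : Set H)) ↔ _
  simp [mem_ker, shift_zero]

lemma mem_pow_zero {A : LinRel H} {x y : H} : (x, y) ∈ pow A 0 ↔ y = x := by
  simp [pow, idRel, LinearMap.mem_graph_iff]

lemma rootInf_step {A : LinRel H} {x y : H} (hx : x ∈ rootInf A) (h : (x, y) ∈ A) :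
    y ∈ rootInf A := by
  obtain ⟨i, hi⟩ := mem_rootInf.1 hx
  exact mem_rootInf.2 ⟨i + 1, x, hi, h⟩

lemma mem_pow_succ_of_step {A : LinRel H} {x z : H} (h : (x, z) ∈ A) :
    ∀ (k : ℕ) (y : H), (z, y) ∈ pow A k → (x, y) ∈ pow A (k + 1)
  | 0, y, hy => by
    rw [mem_pow_zero] at hy
    subst hy
    exact ⟨x, mem_pow_zero.2 rfl, h⟩
  | k + 1, y, ⟨w, hw, hwy⟩ => ⟨w, mem_pow_succ_of_step h k w hw, hwy⟩

lemma rootSpace_step {A : LinRel H} {x y : H} (hy : y ∈ rootSpace A 0) (h : (x, y) ∈ A) :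
    x ∈ rootSpace A 0 := by
  obtain ⟨i, hi⟩ := mem_rootSpace_zero.1 hy
  exact mem_rootSpace_zero.2 ⟨i + 1, mem_pow_succ_of_step h _ _ hi⟩

lemma mem_rootInf_shift_of_pow {A : LinRel H} (lam : ℂ) :
    ∀ (i : ℕ) (x : H), ((0 : H), x) ∈ pow A i → x ∈ rootInf (shift A lam)
  | 0, x, h => by
    rw [mem_pow_zero] at h
    subst h
    exact Submodule.zero_mem _
  | i + 1, x, ⟨w, hw, hwx⟩ => by
    have hw' := mem_rootInf_shift_of_pow lam i w hw
    have hx : x - lam • w ∈ rootInf (shift A lam) :=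
      rootInf_step hw' (mem_shift.2 (by simpa using hwx))
    simpa using Submodule.add_mem _ hx (Submodule.smul_mem _ lam hw')

/-- An infinite chain of `A` starting at `x` can be prolonged backwards along a pair
`(a, x) ∈ Aⁱ`, its terms being delayed by `i` positions. -/
lemma exists_chain {A : LinRel H} : ∀ (i : ℕ) (a x : H), (a, x) ∈ pow A i →
    ∀ f : ℕ → H, (∀ k, (f k, f (k + 1)) ∈ A) → f 0 = x →
    ∃ g : ℕ → H, (∀ k, (g k, g (k + 1)) ∈ A) ∧ g 0 = a ∧ ∀ k, g (i + k) = f k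
  | 0, a, x, h, f, hf, h0 => by
    rw [mem_pow_zero] at h
    exact ⟨f, hf, h0.trans h, fun k => by rw [Nat.zero_add]⟩
  | i + 1, a, x, ⟨z, haz, hzx⟩, f, hf, h0 => by
    obtain ⟨g, hg, hg0, hgi⟩ := exists_chain i a z haz (fun k => Nat.casesOn k z f)
      (by
        rintro (_ | k)
        · simpa [h0] using hzx
        · exact hf k) rfl
    refine ⟨g, hg, hg0, fun k => ?_⟩
    rw [add_assoc, add_comm 1 k]
    exact hgi (k + 1)

/-- A subspace of `ℂ[X]` that contains a monic polynomial of every degree is everything. -/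
lemma eq_top_of_monic {S : Submodule ℂ ℂ[X]}
    (h : ∀ d : ℕ, ∃ q ∈ S, q.Monic ∧ q.natDegree = d) (p : ℂ[X]) : p ∈ S := by
  suffices H : ∀ (d : ℕ) (p : ℂ[X]), p.degree < d → p ∈ S from
    H (p.natDegree + 1) p (degree_le_natDegree.trans_lt (by exact_mod_cast Nat.lt_succ_self _))
  intro d
  induction d with
  | zero =>
    intro p hp
    have : p = 0 := by
      rw [← degree_eq_bot]
      exact Nat.WithBot.lt_zero_iff.1 (by simpa using hp)
    subst this
    exact S.zero_mem
  | succ d ih =>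
    intro p hp
    obtain ⟨q, hqS, hq, hqd⟩ := h d
    have hmem : p - p.coeff d • q ∈ S := by
      apply ih
      rw [degree_lt_iff_coeff_zero] at hp ⊢
      intro m hm
      rcases hm.eq_or_lt with rfl | hm
      · have : q.coeff d = 1 := by rw [← hqd]; exact hq
        simp [this]
      · simp [hp m hm, coeff_eq_zero_of_natDegree_lt (hqd.trans_lt hm)]
    simpa using S.add_mem hmem (S.smul_mem (p.coeff d) hqS)

/-- Every term of a chain of `A` that starts at `0` and is eventually zero belongs to the root
space of `A - λ` at `0`. -/
lemma mem_root_of_chain {A : LinRel H} (lam : ℂ) {u : ℕ → H} (hu : ∀ k, (u k, u (k + 1)) ∈ A)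
    (hu0 : u 0 = 0) {N : ℕ} (hN : ∀ k ≥ N, u k = 0) (i : ℕ) :
    u i ∈ rootSpace (shift A lam) 0 := by
  let φ : ℂ[X] →ₗ[ℂ] H := Polynomial.lsum fun i => LinearMap.toSpanSingleton ℂ H (u i)
  have hφ : ∀ n c, φ (monomial n c) = c • u n := by
    intro n c
    simp [φ, lsum_apply, sum_monomial_index]
  have hφX : ∀ p : ℂ[X], (φ p, φ (X * p)) ∈ A := by
    intro p
    induction p using Polynomial.induction_on' with
    | add p q hp hq => simpa [mul_add] using A.add_mem hp hq
    | monomial n c =>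
      rw [X_mul_monomial, hφ, hφ]
      exact A.smul_mem c (hu n)
  have hφC : ∀ c : ℂ, φ (C c) = 0 := by
    intro c
    rw [← monomial_zero_left, hφ, hu0, smul_zero]
  let S : Submodule ℂ ℂ[X] := (rootSpace (shift A lam) 0).comap φ
  -- With `p` the quotient, `(X - λ) p = q - q(λ)`, so `(φ p, φ q) ∈ A - λ` because `φ` kills `q(λ)`.
  have hdiv : ∀ q ∈ S, q /ₘ (X - C lam) ∈ S := by
    intro q hq
    refine rootSpace_step (y := φ q) hq (mem_shift.2 ?_)
    have h1 : X * (q /ₘ (X - C lam)) =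
        q + lam • (q /ₘ (X - C lam)) - C (q.eval lam) := by
      have h2 := modByMonic_add_div q (X - C lam)
      rw [modByMonic_X_sub_C_eq_C_eval] at h2
      rw [smul_eq_C_mul]
      linear_combination h2
    have h3 := hφX (q /ₘ (X - C lam))
    rwa [h1, map_sub, hφC, sub_zero, map_add, map_smul] at h3
  have hlarge : ∀ d ≥ N, ∃ q ∈ S, q.Monic ∧ q.natDegree = d := by
    intro d hd
    refine ⟨X ^ d, ?_, monic_X_pow d, natDegree_X_pow d⟩
    change φ (X ^ d) ∈ rootSpace (shift A lam) 0
    rw [← monomial_one_right_eq_X_pow, hφ, hN d hd, smul_zero]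
    exact Submodule.zero_mem _
  have hdown : ∀ d, (∃ q ∈ S, q.Monic ∧ q.natDegree = d + 1) →
      ∃ q ∈ S, q.Monic ∧ q.natDegree = d := by
    rintro d ⟨q, hqS, hq, hqd⟩
    refine ⟨_, hdiv q hqS, ?_, ?_⟩
    · rw [Monic, leadingCoeff_divByMonic_of_monic (monic_X_sub_C lam), hq]
      rw [degree_X_sub_C, degree_eq_natDegree hq.ne_zero, hqd]
      exact_mod_cast Nat.le_add_left 1 d
    · rw [natDegree_divByMonic _ (monic_X_sub_C lam), hqd, natDegree_X_sub_C,
        Nat.add_sub_cancel]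
  have hall : ∀ d, ∃ q ∈ S, q.Monic ∧ q.natDegree = d := by
    intro d
    rcases le_total N d with hd | hd
    · exact hlarge d hd
    · exact Nat.decreasingInduction (fun k _ hk => hdown k hk) (hlarge N le_rfl) hd
  have := eq_top_of_monic hall (monomial i 1)
  simpa [S, hφ] using this

lemma singChain_le_shift (A : LinRel H) (lam : ℂ) : singChain A ≤ singChain (shift A lam) := by
  rintro x ⟨h0, hinf⟩
  obtain ⟨j, hj⟩ := mem_rootSpace_zero.1 h0
  obtain ⟨i, hi⟩ := mem_rootInf.1 hinf
  refine ⟨?_, mem_rootInf_shift_of_pow lam _ x hi⟩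
  obtain ⟨f, hf, hf0, hfj⟩ := exists_chain _ x 0 hj (fun _ => 0) (fun _ => A.zero_mem) rfl
  obtain ⟨g, hg, hg0, hgi⟩ := exists_chain _ 0 x hi f hf hf0
  have hx : g (i + 1 + 0) = x := (hgi 0).trans hf0
  rw [← hx]
  refine mem_root_of_chain lam hg hg0 (N := i + 1 + (j + 1)) (fun k hk => ?_) _
  obtain ⟨m, rfl⟩ := Nat.exists_eq_add_of_le hk
  rw [add_assoc (i + 1), hgi, hfj]

end LinRel

/-- `R_c(A) = R_c(A - λ)` for every `λ ∈ ℂ`. -/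
theorem statement_8 (A : LinRel H) (lam : ℂ) :
    LinRel.singChain A = LinRel.singChain (LinRel.shift A lam) := by
  refine le_antisymm (LinRel.singChain_le_shift A lam) ?_
  simpa only [LinRel.shift_shift_neg] using
    LinRel.singChain_le_shift (LinRel.shift A lam) (-lam)
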